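/- arXiv:1001.3859 — 2 statements merged into one kernel-verified Lean document; each statement's English description precedes it below -/
import Mathlib

section
/- Strict monotonicity of Algorithm II: assume m ≥ 3, each x_i = (1, z_iᵀ)ᵀ with z_i ∈ ℝ^{m−1}, and X has full rank m. If w, w' ∈ Ω₊ are related by the Algorithm II update, i.e. w'_i = w_i·(x_iᵀ M(w)^{-1} x_i − 1)/(m − 1) for every i, then det M(w) ≤ det M(w'), with equality only if w' = w. -/
open Matrix Filter

/-- The information matrix `M(w) = ∑ i, w_i x_i x_iᵀ`. -/
noncomputable def Mmat {n m : ℕ} (x : Fin n → Fin m → ℝ) (w : Fin n → ℝ) :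
    Matrix (Fin m) (Fin m) ℝ :=
  ∑ i, w i • Matrix.vecMulVec (x i) (x i)

/-!
Since the columns of `X` contain the constant `1`, translating the design points inside the
hyperplane `⟨x, e⟩ = 1` is a unimodular change of coordinates. So `x` may be translated before
forming `M(w')`, making its mean under `w'` equal to its mean `μ` under `w`. With
`V = M(w)` and `B` the translated `M(w')`, the inequality `det V ≤ det B` follows from
`tr (B⁻¹ V) ≤ m`, because `∏ λ ≤ exp (∑ (λ - 1))` for the eigenvalues of `B⁻¹ V`.

The trace bound is Young's inequality `2 ⟨y, c⟩ ≤ p + (⟨y, V⁻¹ y⟩ / p) ⟨c, V c⟩`, `p = m - 1`, at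
`y = x_i - μ` and `c = B⁻¹ (z_i - μ)` with `z_i` the translated point: `⟨y, V⁻¹ y⟩ / p` is the
factor of the update, so averaging over `w` gives `2 (tr (B⁻¹ V) - 1) ≤ p + (tr (B⁻¹ V) - 1)`.
If `B = V`, equality in Young's inequality makes the supported `x_i - μ` multiples of the
translation `z_i - x_i`. A nonzero translation would then put the support in a plane, which is
impossible for `m ≥ 3`; a zero one forces every supported factor to be `1`.
-/

section Determinant

variable {κ : Type*} [Fintype κ] [DecidableEq κ]

theorem det_lt_exp_trace_sub_card {C : Matrix κ κ ℝ} (hC : C.PosDef) (hne : C ≠ 1) :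
    C.det < Real.exp (C.trace - Fintype.card κ) := by
  have hdet : C.det = ∏ i, hC.1.eigenvalues i := by simpa using hC.1.det_eq_prod_eigenvalues
  have htrace : C.trace = ∑ i, hC.1.eigenvalues i := by simpa using hC.1.trace_eq_sum_eigenvalues
  have hexp : Real.exp (C.trace - Fintype.card κ) = ∏ i, Real.exp (hC.1.eigenvalues i - 1) := by
    simp [htrace, ← Real.exp_sum]
  have hle (i) : hC.1.eigenvalues i ≤ Real.exp (hC.1.eigenvalues i - 1) := by
    linarith [Real.add_one_le_exp (hC.1.eigenvalues i - 1)]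
  obtain ⟨j, hj⟩ : ∃ j, hC.1.eigenvalues j ≠ 1 := by
    contrapose! hne
    have hone : hC.1.eigenvalues = 1 := funext hne
    rw [hC.1.spectral_theorem, hone, RCLike.ofReal_real_eq_id, Function.id_comp, diagonal_one',
      map_one]
  rw [hdet, hexp]
  refine Finset.prod_lt_prod (fun i _ => hC.eigenvalues_pos i) (fun i _ => hle i)
    ⟨j, Finset.mem_univ j, ?_⟩
  linarith [Real.add_one_lt_exp (sub_ne_zero.2 hj)]

open scoped MatrixOrder in
theorem det_lt_det_of_trace_inv_mul_le_card {B V : Matrix κ κ ℝ} (hB : B.PosDef) (hV : V.PosDef)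
    (htrace : (B⁻¹ * V).trace ≤ Fintype.card κ) (hne : V ≠ B) : V.det < B.det := by
  obtain ⟨S, rfl⟩ : ∃ S, V = Sᴴ * S :=
    CStarAlgebra.nonneg_iff_eq_star_mul_self.1 hV.posSemidef.nonneg
  have hS : IsUnit S := isUnit_of_mul_isUnit_right hV.isUnit
  have hC : (S * B⁻¹ * Sᴴ).PosDef := hB.inv.mul_mul_conjTranspose_same
    (vecMul_injective_iff_isUnit.2 hS)
  have hC_ne : S * B⁻¹ * Sᴴ ≠ 1 := by
    intro h
    rw [mul_assoc, mul_eq_one_comm, mul_assoc] at h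
    exact hne ((inv_eq_right_inv h).symm.trans (nonsing_inv_nonsing_inv B hB.det_pos.ne'.isUnit))
  have htrace_C : (S * B⁻¹ * Sᴴ).trace = (B⁻¹ * (Sᴴ * S)).trace := by
    rw [mul_assoc, trace_mul_comm, mul_assoc]
  have hdet_C : (S * B⁻¹ * Sᴴ).det = (Sᴴ * S).det / B.det := by
    simp only [det_mul, det_nonsing_inv, Ring.inverse_eq_inv']
    ring
  have hlt : (Sᴴ * S).det / B.det < 1 := by
    rw [← hdet_C]
    refine (det_lt_exp_trace_sub_card hC hC_ne).trans_le (Real.exp_le_one_iff.2 ?_)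
    rw [htrace_C]
    linarith
  exact (div_lt_one hB.det_pos).1 hlt

end Determinant

section Young

variable {κ : Type*} [Fintype κ]

theorem dotProduct_mulVec_eq_mulVec_dotProduct {V : Matrix κ κ ℝ} (hV : V.IsHermitian)
    (a b : κ → ℝ) : a ⬝ᵥ V *ᵥ b = (V *ᵥ a) ⬝ᵥ b := by
  rw [dotProduct_mulVec, ← mulVec_transpose, ← conjTranspose_eq_transpose_of_trivial, hV.eq]

variable [DecidableEq κ] {V : Matrix κ κ ℝ}

theorem inv_mulVec_mulVec (hV : IsUnit V) (c : κ → ℝ) : V⁻¹ *ᵥ V *ᵥ c = c := by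
  rw [mulVec_mulVec, nonsing_inv_mul _ ((isUnit_iff_isUnit_det V).1 hV), one_mulVec]

theorem dotProduct_inv_mulVec_sub_smul_mulVec (hV : V.PosDef) (y c : κ → ℝ) (r : ℝ) :
    (y - r • V *ᵥ c) ⬝ᵥ V⁻¹ *ᵥ (y - r • V *ᵥ c) =
      y ⬝ᵥ V⁻¹ *ᵥ y - 2 * r * (y ⬝ᵥ c) + r ^ 2 * (c ⬝ᵥ V *ᵥ c) := by
  have hcross : (V *ᵥ c) ⬝ᵥ V⁻¹ *ᵥ y = y ⬝ᵥ c := by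
    rw [dotProduct_mulVec_eq_mulVec_dotProduct hV.inv.1, inv_mulVec_mulVec hV.isUnit,
      dotProduct_comm]
  simp only [mulVec_sub, mulVec_smul, sub_dotProduct, dotProduct_sub, smul_dotProduct,
    dotProduct_smul, smul_eq_mul, inv_mulVec_mulVec hV.isUnit, hcross,
    dotProduct_comm (V *ᵥ c) c]
  ring

theorem two_mul_dotProduct_le_add_div_mul (hV : V.PosDef) (y c : κ → ℝ) {p : ℝ} (hp : 0 < p) :
    2 * (y ⬝ᵥ c) ≤ p + y ⬝ᵥ V⁻¹ *ᵥ y / p * (c ⬝ᵥ V *ᵥ c) := by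
  rcases eq_or_ne y 0 with rfl | hy
  · simpa using hp.le
  have hquad : 0 < y ⬝ᵥ V⁻¹ *ᵥ y := by simpa using hV.inv.dotProduct_mulVec_pos hy
  set r := y ⬝ᵥ V⁻¹ *ᵥ y / p with hr
  have hr_pos : 0 < r := div_pos hquad hp
  have hsq : 0 ≤ r * (p + r * (c ⬝ᵥ V *ᵥ c) - 2 * (y ⬝ᵥ c)) := by
    have := hV.inv.posSemidef.dotProduct_mulVec_nonneg (y - r • V *ᵥ c)
    rw [star_trivial, dotProduct_inv_mulVec_sub_smul_mulVec hV,
      ← div_mul_cancel₀ (y ⬝ᵥ V⁻¹ *ᵥ y) hp.ne', ← hr] at this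
    linarith
  linarith [nonneg_of_mul_nonneg_right hsq hr_pos]

theorem eq_smul_mulVec_of_two_mul_dotProduct_eq (hV : V.PosDef) {y c : κ → ℝ} {p : ℝ}
    (hp : p ≠ 0) (h : 2 * (y ⬝ᵥ c) = p + y ⬝ᵥ V⁻¹ *ᵥ y / p * (c ⬝ᵥ V *ᵥ c)) :
    y = (y ⬝ᵥ V⁻¹ *ᵥ y / p) • V *ᵥ c := by
  set r := y ⬝ᵥ V⁻¹ *ᵥ y / p with hr
  have hsq : (y - r • V *ᵥ c) ⬝ᵥ V⁻¹ *ᵥ (y - r • V *ᵥ c) = 0 := by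
    rw [dotProduct_inv_mulVec_sub_smul_mulVec hV, ← div_mul_cancel₀ (y ⬝ᵥ V⁻¹ *ᵥ y) hp, ← hr]
    linear_combination -r * h
  by_contra hne
  have := hV.inv.dotProduct_mulVec_pos (sub_ne_zero.2 hne)
  rw [star_trivial] at this
  exact this.ne' hsq

end Young

section InfoMatrix

variable {ι κ : Type*} [Fintype ι]

/-- The information matrix `M(w) = ∑ i, w_i x_i x_iᵀ` of `Mmat`, for arbitrary index types. -/
noncomputable def infoMatrix (x : ι → κ → ℝ) (w : ι → ℝ) : Matrix κ κ ℝ :=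
  ∑ i, w i • vecMulVec (x i) (x i)

/-- The mean `∑ i, w_i x_i` of the design points under weights `w` of total mass one. -/
def designMean (x : ι → κ → ℝ) (w : ι → ℝ) : κ → ℝ :=
  ∑ i, w i • x i

variable {x : ι → κ → ℝ} {w : ι → ℝ} {e : κ → ℝ}

theorem posSemidef_infoMatrix [Finite κ] (x : ι → κ → ℝ) (hw : ∀ i, 0 ≤ w i) :
    (infoMatrix x w).PosSemidef :=
  posSemidef_sum _ fun i _ => (posSemidef_vecMulVec_self_star (x i)).smul (hw i)

variable [Fintype κ]

theorem infoMatrix_mulVec (x : ι → κ → ℝ) (w : ι → ℝ) (v : κ → ℝ) :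
    infoMatrix x w *ᵥ v = ∑ i, (w i * (x i ⬝ᵥ v)) • x i := by
  simp [infoMatrix, sum_mulVec, smul_mulVec, vecMulVec_mulVec, mul_smul]

theorem dotProduct_infoMatrix_mulVec_self (x : ι → κ → ℝ) (w : ι → ℝ) (v : κ → ℝ) :
    v ⬝ᵥ infoMatrix x w *ᵥ v = ∑ i, w i * (x i ⬝ᵥ v) ^ 2 := by
  simp only [infoMatrix_mulVec, dotProduct_sum, dotProduct_smul, smul_eq_mul]
  exact Finset.sum_congr rfl fun i _ => by rw [dotProduct_comm v]; ring

theorem trace_mul_infoMatrix (G : Matrix κ κ ℝ) (x : ι → κ → ℝ) (w : ι → ℝ) :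
    (G * infoMatrix x w).trace = ∑ i, w i * (x i ⬝ᵥ G *ᵥ x i) := by
  simp [infoMatrix, Matrix.mul_sum, trace_sum, mul_vecMulVec, dotProduct_comm (G *ᵥ _)]

theorem infoMatrix_mulVec_design (T : Matrix κ κ ℝ) (x : ι → κ → ℝ) (w : ι → ℝ) :
    infoMatrix (fun i => T *ᵥ x i) w = T * infoMatrix x w * Tᵀ := by
  simp [infoMatrix, Matrix.mul_sum, Matrix.sum_mul, mul_vecMulVec, vecMulVec_mul, vecMul_transpose]

theorem designMean_dotProduct (hx : ∀ i, x i ⬝ᵥ e = 1) (hw : ∑ i, w i = 1) :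
    designMean x w ⬝ᵥ e = 1 := by
  simp [designMean, sum_dotProduct, hx, hw]

theorem infoMatrix_mulVec_eq_designMean (hx : ∀ i, x i ⬝ᵥ e = 1) :
    infoMatrix x w *ᵥ e = designMean x w := by
  simp [infoMatrix_mulVec, designMean, hx]

theorem sum_mul_dotProduct_mulVec_sub_designMean (G : Matrix κ κ ℝ) (hw : ∑ i, w i = 1)
    (b : κ → ℝ) :
    ∑ i, w i * ((x i - designMean x w) ⬝ᵥ G *ᵥ (x i - b)) =
      (G * infoMatrix x w).trace - designMean x w ⬝ᵥ G *ᵥ designMean x w := by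
  set μ := designMean x w with hμ
  have hleft (a : κ → ℝ) : ∑ i, w i * (x i ⬝ᵥ a) = μ ⬝ᵥ a := by
    simp [hμ, designMean, sum_dotProduct]
  have hright : ∑ i, w i * (μ ⬝ᵥ G *ᵥ x i) = μ ⬝ᵥ G *ᵥ μ := by
    simpa only [dotProduct_mulVec, dotProduct_comm _ (μ ᵥ* G)] using hleft (μ ᵥ* G)
  have hexpand (i) : w i * ((x i - μ) ⬝ᵥ G *ᵥ (x i - b)) =
      w i * (x i ⬝ᵥ G *ᵥ x i) - w i * (x i ⬝ᵥ G *ᵥ b) - w i * (μ ⬝ᵥ G *ᵥ x i) +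
        w i * (μ ⬝ᵥ G *ᵥ b) := by
    simp only [mulVec_sub, sub_dotProduct, dotProduct_sub]
    ring
  simp only [hexpand, Finset.sum_add_distrib, Finset.sum_sub_distrib, hleft, hright,
    ← trace_mul_infoMatrix, ← Finset.sum_mul, hw]
  ring

variable [DecidableEq κ]

theorem infoMatrix_inv_mulVec_designMean (hx : ∀ i, x i ⬝ᵥ e = 1)
    (hM : IsUnit (infoMatrix x w)) : (infoMatrix x w)⁻¹ *ᵥ designMean x w = e := by
  rw [← infoMatrix_mulVec_eq_designMean hx, inv_mulVec_mulVec hM]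

theorem eq_top_of_forall_support_mem (hM : IsUnit (infoMatrix x w)) {p : Submodule ℝ (κ → ℝ)}
    (hp : ∀ i, w i ≠ 0 → x i ∈ p) : p = ⊤ := by
  refine Submodule.eq_top_iff'.2 fun u => ?_
  obtain ⟨v, rfl⟩ := mulVec_surjective_iff_isUnit.2 hM u
  rw [infoMatrix_mulVec]
  refine p.sum_mem fun i _ => ?_
  by_cases hi : w i = 0
  · simp [hi]
  · exact p.smul_mem _ (hp i hi)

theorem card_le_of_forall_support_mem_span (hM : IsUnit (infoMatrix x w)) {s : Finset (κ → ℝ)}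
    (hs : ∀ i, w i ≠ 0 → x i ∈ Submodule.span ℝ (s : Set (κ → ℝ))) :
    Fintype.card κ ≤ s.card := by
  have hspan := finrank_span_finset_le_card (R := ℝ) s
  rwa [Set.finrank, eq_top_of_forall_support_mem hM hs, finrank_top,
    Module.finrank_fintype_fun_eq_card] at hspan

theorem dotProduct_inv_mulVec_sub_designMean (hx : ∀ i, x i ⬝ᵥ e = 1) (hw : ∑ i, w i = 1)
    (hM : (infoMatrix x w).PosDef) (i : ι) :
    (x i - designMean x w) ⬝ᵥ (infoMatrix x w)⁻¹ *ᵥ (x i - designMean x w) =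
      x i ⬝ᵥ (infoMatrix x w)⁻¹ *ᵥ x i - 1 := by
  have hmean : designMean x w ⬝ᵥ (infoMatrix x w)⁻¹ *ᵥ x i = 1 := by
    rw [dotProduct_mulVec_eq_mulVec_dotProduct hM.inv.1,
      infoMatrix_inv_mulVec_designMean hx hM.isUnit, dotProduct_comm, hx]
  rw [mulVec_sub, infoMatrix_inv_mulVec_designMean hx hM.isUnit, sub_dotProduct, dotProduct_sub,
    dotProduct_sub, hmean, hx, designMean_dotProduct hx hw]
  ring

theorem det_infoMatrix_add {d : κ → ℝ} (hx : ∀ i, x i ⬝ᵥ e = 1) (hd : d ⬝ᵥ e = 0) :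
    (infoMatrix (fun i => x i + d) w).det = (infoMatrix x w).det := by
  have hshear : (fun i => x i + d) = fun i => (1 + vecMulVec d e) *ᵥ x i := by
    funext i
    simp [add_mulVec, vecMulVec_mulVec, dotProduct_comm e, hx]
  have hdet : (1 + vecMulVec d e).det = 1 := by
    rw [vecMulVec_eq Unit, det_one_add_replicateCol_mul_replicateRow, dotProduct_comm, hd, add_zero]
  rw [hshear, infoMatrix_mulVec_design, det_mul, det_mul, det_transpose, hdet, one_mul, mul_one]

end InfoMatrix

section Recentred

variable {ι κ : Type*} [Fintype ι] {x : ι → κ → ℝ} {w v : ι → ℝ} {e : κ → ℝ}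

/-- The design `x` translated so that its mean under `v` becomes the mean of `x` under `w`. -/
def recentred (x : ι → κ → ℝ) (w v : ι → ℝ) : ι → κ → ℝ :=
  fun i => x i + (designMean x w - designMean x v)

theorem designMean_recentred (x : ι → κ → ℝ) (w : ι → ℝ) (hv : ∑ i, v i = 1) :
    designMean (recentred x w v) v = designMean x w := by
  rw [designMean]
  simp only [recentred, smul_add, Finset.sum_add_distrib, ← Finset.sum_smul, hv, one_smul]
  exact add_sub_cancel _ _

/-- The information matrix under `v` of the design recentred at the mean of `x` under `w`; it plays
the role of `B` when `v` is the updated weight vector. -/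
noncomputable def recentredInfoMatrix (x : ι → κ → ℝ) (w v : ι → ℝ) : Matrix κ κ ℝ :=
  infoMatrix (recentred x w v) v

variable [Fintype κ]

theorem designMean_sub_dotProduct (hx : ∀ i, x i ⬝ᵥ e = 1) (hw : ∑ i, w i = 1)
    (hv : ∑ i, v i = 1) : (designMean x w - designMean x v) ⬝ᵥ e = 0 := by
  rw [sub_dotProduct, designMean_dotProduct hx hw, designMean_dotProduct hx hv, sub_self]

theorem recentred_dotProduct (hx : ∀ i, x i ⬝ᵥ e = 1) (hw : ∑ i, w i = 1) (hv : ∑ i, v i = 1)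
    (i : ι) : recentred x w v i ⬝ᵥ e = 1 := by
  rw [recentred, add_dotProduct, hx, designMean_sub_dotProduct hx hw hv, add_zero]

theorem det_recentredInfoMatrix [DecidableEq κ] (hx : ∀ i, x i ⬝ᵥ e = 1) (hw : ∑ i, w i = 1)
    (hv : ∑ i, v i = 1) : (recentredInfoMatrix x w v).det = (infoMatrix x v).det :=
  det_infoMatrix_add hx (designMean_sub_dotProduct hx hw hv)

theorem posDef_recentredInfoMatrix (hx : ∀ i, x i ⬝ᵥ e = 1) (hw : ∑ i, w i = 1)
    (hv : ∑ i, v i = 1) (hv_nonneg : ∀ i, 0 ≤ v i) (hM : (infoMatrix x v).PosDef) :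
    (recentredInfoMatrix x w v).PosDef := by
  classical
  rw [recentredInfoMatrix, (posSemidef_infoMatrix _ hv_nonneg).posDef_iff_det_ne_zero,
    ← recentredInfoMatrix, det_recentredInfoMatrix hx hw hv]
  exact hM.det_pos.ne'

variable [DecidableEq κ]

theorem recentredInfoMatrix_inv_mulVec_designMean (hx : ∀ i, x i ⬝ᵥ e = 1) (hw : ∑ i, w i = 1)
    (hv : ∑ i, v i = 1) (hB : IsUnit (recentredInfoMatrix x w v)) :
    (recentredInfoMatrix x w v)⁻¹ *ᵥ designMean x w = e := by
  rw [← designMean_recentred x w hv]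
  exact infoMatrix_inv_mulVec_designMean (recentred_dotProduct hx hw hv) hB

/-- The vector `B⁻¹ (z_i - μ)`, where `z` is the design recentred at the mean `μ` of `x` under `w`
and `B` is its information matrix under `v`. Young's inequality is applied with it as `c`. -/
noncomputable def recentredDual (x : ι → κ → ℝ) (w v : ι → ℝ) (i : ι) : κ → ℝ :=
  (recentredInfoMatrix x w v)⁻¹ *ᵥ (recentred x w v i - designMean x w)

theorem sum_mul_dotProduct_recentredDual (hx : ∀ i, x i ⬝ᵥ e = 1) (hw : ∑ i, w i = 1)
    (hv : ∑ i, v i = 1) (hB : IsUnit (recentredInfoMatrix x w v)) :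
    ∑ i, w i * ((x i - designMean x w) ⬝ᵥ recentredDual x w v i) =
      ((recentredInfoMatrix x w v)⁻¹ * infoMatrix x w).trace - 1 := by
  have hμ := recentredInfoMatrix_inv_mulVec_designMean hx hw hv hB
  have hsub (i) : recentred x w v i - designMean x w = x i - designMean x v := by
    rw [recentred]
    abel
  simp only [recentredDual, hsub]
  rw [sum_mul_dotProduct_mulVec_sub_designMean _ hw, hμ, designMean_dotProduct hx hw]

theorem sum_mul_recentredDual_dotProduct_mulVec (hx : ∀ i, x i ⬝ᵥ e = 1) (hw : ∑ i, w i = 1)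
    (hv : ∑ i, v i = 1) (hB : (recentredInfoMatrix x w v).PosDef) :
    ∑ i, v i * (recentredDual x w v i ⬝ᵥ infoMatrix x w *ᵥ recentredDual x w v i) =
      ((recentredInfoMatrix x w v)⁻¹ * infoMatrix x w).trace - 1 := by
  have hμ := recentredInfoMatrix_inv_mulVec_designMean hx hw hv hB.isUnit
  have hcentred := sum_mul_dotProduct_mulVec_sub_designMean
    ((recentredInfoMatrix x w v)⁻¹ * infoMatrix x w * (recentredInfoMatrix x w v)⁻¹)
    hv (designMean x w) (x := recentred x w v)
  rw [designMean_recentred x w hv, ← recentredInfoMatrix] at hcentred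
  simp only [recentredDual]
  set B := recentredInfoMatrix x w v
  have hquad (a : κ → ℝ) : a ⬝ᵥ (B⁻¹ * infoMatrix x w * B⁻¹) *ᵥ a =
      (B⁻¹ *ᵥ a) ⬝ᵥ infoMatrix x w *ᵥ B⁻¹ *ᵥ a := by
    rw [← mulVec_mulVec, ← mulVec_mulVec, dotProduct_mulVec_eq_mulVec_dotProduct hB.inv.1]
  simp only [hquad, hμ, infoMatrix_mulVec_eq_designMean hx] at hcentred
  rw [hcentred, dotProduct_comm, designMean_dotProduct hx hw,
    nonsing_inv_mul_cancel_right _ _ hB.det_pos.ne'.isUnit]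

end Recentred

section AlgorithmII

variable {ι κ : Type*} [Fintype ι] [Fintype κ] [DecidableEq κ]
  {x : ι → κ → ℝ} {w : ι → ℝ} {e : κ → ℝ}

/-- The factor `(x_iᵀ M(w)⁻¹ x_i - 1) / (m - 1)` by which Algorithm II multiplies `w_i`. -/
noncomputable def algorithmIIFactor (x : ι → κ → ℝ) (w : ι → ℝ) (i : ι) : ℝ :=
  (x i ⬝ᵥ (infoMatrix x w)⁻¹ *ᵥ x i - 1) / ((Fintype.card κ : ℝ) - 1)

/-- One step of Algorithm II, started at the weights `w`. -/
noncomputable def algorithmIIStep (x : ι → κ → ℝ) (w : ι → ℝ) (i : ι) : ℝ :=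
  w i * algorithmIIFactor x w i

theorem algorithmIIFactor_eq (hx : ∀ i, x i ⬝ᵥ e = 1) (hw : ∑ i, w i = 1)
    (hM : (infoMatrix x w).PosDef) (i : ι) :
    algorithmIIFactor x w i = (x i - designMean x w) ⬝ᵥ
      (infoMatrix x w)⁻¹ *ᵥ (x i - designMean x w) / ((Fintype.card κ : ℝ) - 1) := by
  rw [algorithmIIFactor, dotProduct_inv_mulVec_sub_designMean hx hw hM]

theorem algorithmIIFactor_nonneg (hκ : 1 < Fintype.card κ) (hx : ∀ i, x i ⬝ᵥ e = 1)
    (hw : ∑ i, w i = 1) (hM : (infoMatrix x w).PosDef) (i : ι) : 0 ≤ algorithmIIFactor x w i := by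
  rw [algorithmIIFactor_eq hx hw hM]
  exact div_nonneg (hM.inv.posSemidef.dotProduct_mulVec_nonneg _)
    (sub_pos.2 (Nat.one_lt_cast.2 hκ)).le

theorem algorithmIIFactor_eq_zero_iff (hκ : 1 < Fintype.card κ) (hx : ∀ i, x i ⬝ᵥ e = 1)
    (hw : ∑ i, w i = 1) (hM : (infoMatrix x w).PosDef) (i : ι) :
    algorithmIIFactor x w i = 0 ↔ x i = designMean x w := by
  rw [algorithmIIFactor_eq hx hw hM, div_eq_zero_iff,
    or_iff_left (sub_pos.2 (Nat.one_lt_cast.2 hκ)).ne', ← sub_eq_zero (a := x i)]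
  refine ⟨fun h => ?_, fun h => by simp [h]⟩
  by_contra hne
  exact (hM.inv.dotProduct_mulVec_pos hne).ne' h

theorem algorithmIIStep_nonneg (hκ : 1 < Fintype.card κ) (hx : ∀ i, x i ⬝ᵥ e = 1)
    (hw_nonneg : ∀ i, 0 ≤ w i) (hw : ∑ i, w i = 1) (hM : (infoMatrix x w).PosDef) (i : ι) :
    0 ≤ algorithmIIStep x w i :=
  mul_nonneg (hw_nonneg i) (algorithmIIFactor_nonneg hκ hx hw hM i)

theorem sum_algorithmIIStep (hκ : 1 < Fintype.card κ) (hw : ∑ i, w i = 1)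
    (hM : IsUnit (infoMatrix x w)) : ∑ i, algorithmIIStep x w i = 1 := by
  have htrace := trace_mul_infoMatrix (infoMatrix x w)⁻¹ x w
  rw [nonsing_inv_mul _ ((isUnit_iff_isUnit_det _).1 hM), trace_one] at htrace
  simp only [algorithmIIStep, algorithmIIFactor, mul_div_assoc', ← Finset.sum_div, mul_sub,
    mul_one, Finset.sum_sub_distrib, ← htrace, hw]
  exact div_self (sub_pos.2 (Nat.one_lt_cast.2 hκ)).ne'

theorem exists_support_ne_designMean (hκ : 1 < Fintype.card κ) (hM : IsUnit (infoMatrix x w)) :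
    ∃ i, w i ≠ 0 ∧ x i ≠ designMean x w := by
  by_contra! h
  have := card_le_of_forall_support_mem_span hM (s := {designMean x w})
    fun i hi => by simp [h i hi]
  rw [Finset.card_singleton] at this
  omega

theorem posDef_infoMatrix_algorithmIIStep (hκ : 1 < Fintype.card κ) (hx : ∀ i, x i ⬝ᵥ e = 1)
    (hw_nonneg : ∀ i, 0 ≤ w i) (hw : ∑ i, w i = 1) (hM : (infoMatrix x w).PosDef) :
    (infoMatrix x (algorithmIIStep x w)).PosDef := by
  have hstep_nonneg := algorithmIIStep_nonneg hκ hx hw_nonneg hw hM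
  refine .of_dotProduct_mulVec_pos (posSemidef_infoMatrix x hstep_nonneg).1 fun u hu => ?_
  rw [star_trivial, dotProduct_infoMatrix_mulVec_self]
  have hterm (i) : 0 ≤ algorithmIIStep x w i * (x i ⬝ᵥ u) ^ 2 :=
    mul_nonneg (hstep_nonneg i) (sq_nonneg _)
  refine (Finset.sum_nonneg fun i _ => hterm i).lt_of_ne' fun hsum => hu ?_
  have horth (i) (hi : w i ≠ 0) (hxi : x i ≠ designMean x w) : x i ⬝ᵥ u = 0 := by
    have hzero := (Finset.sum_eq_zero_iff_of_nonneg fun i _ => hterm i).1 hsum i (Finset.mem_univ i)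
    exact pow_eq_zero_iff two_ne_zero |>.1 <| (mul_eq_zero.1 hzero).resolve_left <|
      mul_ne_zero hi (mt (algorithmIIFactor_eq_zero_iff hκ hx hw hM i).1 hxi)
  obtain ⟨a, rfl⟩ : ∃ a : ℝ, u = a • e := by
    refine ⟨∑ i, w i * (x i ⬝ᵥ u), mulVec_injective_iff_isUnit.2 hM.isUnit ?_⟩
    rw [mulVec_smul, infoMatrix_mulVec_eq_designMean hx, infoMatrix_mulVec, Finset.sum_smul]
    refine Finset.sum_congr rfl fun i _ => ?_
    by_cases hi : w i = 0
    · simp [hi]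
    by_cases hxi : x i = designMean x w
    · rw [hxi]
    · simp [horth i hi hxi]
  obtain ⟨i, hi, hxi⟩ := exists_support_ne_designMean hκ hM.isUnit
  have ha : a = 0 := by simpa [hx] using horth i hi hxi
  simp [ha]

/-- The gap at the `i`-th point in the Young inequality that bounds the trace of `B⁻¹ V`. -/
noncomputable def youngGap (x : ι → κ → ℝ) (w : ι → ℝ) (i : ι) : ℝ :=
  (Fintype.card κ : ℝ) - 1
    + algorithmIIFactor x w i * (recentredDual x w (algorithmIIStep x w) i ⬝ᵥ
        infoMatrix x w *ᵥ recentredDual x w (algorithmIIStep x w) i)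
    - 2 * ((x i - designMean x w) ⬝ᵥ recentredDual x w (algorithmIIStep x w) i)

theorem youngGap_nonneg (hκ : 1 < Fintype.card κ) (hx : ∀ i, x i ⬝ᵥ e = 1)
    (hw : ∑ i, w i = 1) (hM : (infoMatrix x w).PosDef) (i : ι) : 0 ≤ youngGap x w i := by
  rw [youngGap, algorithmIIFactor_eq hx hw hM, sub_nonneg]
  exact two_mul_dotProduct_le_add_div_mul hM _ _ (sub_pos.2 (Nat.one_lt_cast.2 hκ))

theorem sub_designMean_eq_of_youngGap_eq_zero (hκ : 1 < Fintype.card κ)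
    (hx : ∀ i, x i ⬝ᵥ e = 1) (hw : ∑ i, w i = 1) (hM : (infoMatrix x w).PosDef) {i : ι}
    (hgap : youngGap x w i = 0) :
    x i - designMean x w = algorithmIIFactor x w i •
      infoMatrix x w *ᵥ recentredDual x w (algorithmIIStep x w) i := by
  rw [youngGap, algorithmIIFactor_eq hx hw hM, sub_eq_zero] at hgap
  rw [algorithmIIFactor_eq hx hw hM]
  exact eq_smul_mulVec_of_two_mul_dotProduct_eq hM (sub_pos.2 (Nat.one_lt_cast.2 hκ)).ne' hgap.symm

theorem ne_designMean_of_youngGap_eq_zero (hκ : 1 < Fintype.card κ) (hx : ∀ i, x i ⬝ᵥ e = 1)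
    (hw : ∑ i, w i = 1) (hM : (infoMatrix x w).PosDef) {i : ι} (hgap : youngGap x w i = 0) :
    x i ≠ designMean x w := by
  intro hxi
  have hfactor := (algorithmIIFactor_eq_zero_iff hκ hx hw hM i).2 hxi
  rw [youngGap, hfactor, hxi, sub_self, zero_dotProduct] at hgap
  linarith [sub_pos.2 (Nat.one_lt_cast (α := ℝ).2 hκ)]

theorem sum_mul_youngGap (hx : ∀ i, x i ⬝ᵥ e = 1) (hw : ∑ i, w i = 1)
    (hstep : ∑ i, algorithmIIStep x w i = 1)
    (hB : (recentredInfoMatrix x w (algorithmIIStep x w)).PosDef) :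
    ∑ i, w i * youngGap x w i = Fintype.card κ -
      ((recentredInfoMatrix x w (algorithmIIStep x w))⁻¹ *
        infoMatrix x w).trace := by
  have hlinear := sum_mul_dotProduct_recentredDual hx hw hstep hB.isUnit
  have hquadratic := sum_mul_recentredDual_dotProduct_mulVec hx hw hstep hB
  have hexpand (i) : w i * youngGap x w i = w i * ((Fintype.card κ : ℝ) - 1)
      + algorithmIIStep x w i * (recentredDual x w (algorithmIIStep x w) i ⬝ᵥ
          infoMatrix x w *ᵥ recentredDual x w (algorithmIIStep x w) i)
      - 2 * (w i * ((x i - designMean x w) ⬝ᵥ recentredDual x w (algorithmIIStep x w) i)) := by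
    rw [youngGap, algorithmIIStep]
    ring
  simp only [hexpand, Finset.sum_sub_distrib, Finset.sum_add_distrib, ← Finset.sum_mul,
    ← Finset.mul_sum, hw, hlinear, hquadratic]
  ring

theorem trace_recentredInfoMatrix_inv_mul_le_card (hκ : 1 < Fintype.card κ)
    (hx : ∀ i, x i ⬝ᵥ e = 1) (hw_nonneg : ∀ i, 0 ≤ w i) (hw : ∑ i, w i = 1)
    (hM : (infoMatrix x w).PosDef)
    (hB : (recentredInfoMatrix x w (algorithmIIStep x w)).PosDef) :
    ((recentredInfoMatrix x w (algorithmIIStep x w))⁻¹ * infoMatrix x w).trace ≤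
      Fintype.card κ := by
  rw [← sub_nonneg, ← sum_mul_youngGap hx hw (sum_algorithmIIStep hκ hw hM.isUnit) hB]
  exact Finset.sum_nonneg fun i _ => mul_nonneg (hw_nonneg i) (youngGap_nonneg hκ hx hw hM i)

theorem youngGap_eq_zero_of_recentredInfoMatrix_eq (hκ : 1 < Fintype.card κ)
    (hx : ∀ i, x i ⬝ᵥ e = 1) (hw_nonneg : ∀ i, 0 ≤ w i) (hw : ∑ i, w i = 1)
    (hM : (infoMatrix x w).PosDef)
    (hB : recentredInfoMatrix x w (algorithmIIStep x w) = infoMatrix x w) {i : ι}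
    (hi : w i ≠ 0) : youngGap x w i = 0 := by
  have hsum : ∑ j, w j * youngGap x w j = 0 := by
    rw [sum_mul_youngGap hx hw (sum_algorithmIIStep hκ hw hM.isUnit) (hB ▸ hM), hB,
      nonsing_inv_mul _ hM.det_pos.ne'.isUnit, trace_one, sub_self]
  have hterm := (Finset.sum_eq_zero_iff_of_nonneg fun j _ =>
    mul_nonneg (hw_nonneg j) (youngGap_nonneg hκ hx hw hM j)).1 hsum i (Finset.mem_univ i)
  exact (mul_eq_zero.1 hterm).resolve_left hi

theorem sub_designMean_eq_of_recentredInfoMatrix_eq (hκ : 1 < Fintype.card κ)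
    (hx : ∀ i, x i ⬝ᵥ e = 1) (hw_nonneg : ∀ i, 0 ≤ w i) (hw : ∑ i, w i = 1)
    (hM : (infoMatrix x w).PosDef)
    (hB : recentredInfoMatrix x w (algorithmIIStep x w) = infoMatrix x w) {i : ι}
    (hi : w i ≠ 0) :
    x i - designMean x w =
      algorithmIIFactor x w i • (x i - designMean x (algorithmIIStep x w)) := by
  have hyoung := sub_designMean_eq_of_youngGap_eq_zero hκ hx hw hM
    (youngGap_eq_zero_of_recentredInfoMatrix_eq hκ hx hw_nonneg hw hM hB hi)
  rw [recentredDual, hB, mulVec_mulVec, mul_nonsing_inv _ hM.det_pos.ne'.isUnit,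
    one_mulVec] at hyoung
  rw [hyoung, recentred]
  congr 1
  abel

theorem designMean_algorithmIIStep_eq_of_recentredInfoMatrix_eq (hκ : 3 ≤ Fintype.card κ)
    (hx : ∀ i, x i ⬝ᵥ e = 1) (hw_nonneg : ∀ i, 0 ≤ w i) (hw : ∑ i, w i = 1)
    (hM : (infoMatrix x w).PosDef)
    (hB : recentredInfoMatrix x w (algorithmIIStep x w) = infoMatrix x w) :
    designMean x (algorithmIIStep x w) = designMean x w := by
  classical
  set μ := designMean x w
  set μ' := designMean x (algorithmIIStep x w)
  by_contra hμ
  have hplane (i) (hi : w i ≠ 0) :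
      x i ∈ Submodule.span ℝ ((({μ, μ'} : Finset (κ → ℝ))) : Set (κ → ℝ)) := by
    have hxi : x i - μ = algorithmIIFactor x w i • (x i - μ') :=
      sub_designMean_eq_of_recentredInfoMatrix_eq (by omega) hx hw_nonneg hw hM hB hi
    set r := algorithmIIFactor x w i
    have hr : 1 - r ≠ 0 := by
      intro hr
      rw [← sub_eq_zero.1 hr, one_smul] at hxi
      exact hμ (sub_right_injective hxi).symm
    have hcomb : (1 - r) • x i = μ - r • μ' := by
      linear_combination (norm := module) hxi
    rw [← Submodule.smul_mem_iff _ hr, hcomb, Finset.coe_pair]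
    exact sub_mem (Submodule.mem_span_of_mem (by simp))
      (Submodule.smul_mem _ r (Submodule.mem_span_of_mem (by simp)))
  have := (card_le_of_forall_support_mem_span hM.isUnit hplane).trans Finset.card_le_two
  omega

theorem algorithmIIStep_eq_of_recentredInfoMatrix_eq (hκ : 3 ≤ Fintype.card κ)
    (hx : ∀ i, x i ⬝ᵥ e = 1) (hw_nonneg : ∀ i, 0 ≤ w i) (hw : ∑ i, w i = 1)
    (hM : (infoMatrix x w).PosDef)
    (hB : recentredInfoMatrix x w (algorithmIIStep x w) = infoMatrix x w) :
    algorithmIIStep x w = w := by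
  have hκ' : 1 < Fintype.card κ := by omega
  funext i
  by_cases hi : w i = 0
  · simp [algorithmIIStep, hi]
  have hfix := sub_designMean_eq_of_recentredInfoMatrix_eq hκ' hx hw_nonneg hw hM hB hi
  rw [designMean_algorithmIIStep_eq_of_recentredInfoMatrix_eq hκ hx hw_nonneg hw hM hB] at hfix
  have hne : x i - designMean x w ≠ 0 := sub_ne_zero.2 <|
    ne_designMean_of_youngGap_eq_zero hκ' hx hw hM
      (youngGap_eq_zero_of_recentredInfoMatrix_eq hκ' hx hw_nonneg hw hM hB hi)
  have hfactor : algorithmIIFactor x w i = 1 :=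
    smul_left_injective ℝ hne (hfix.symm.trans (one_smul ℝ _).symm)
  rw [algorithmIIStep, hfactor, mul_one]

end AlgorithmII

theorem stmt_0_general {ι κ : Type*} [Fintype ι] [Fintype κ] [DecidableEq κ]
    (hκ : 3 ≤ Fintype.card κ) (x : ι → κ → ℝ) (e : κ → ℝ) (hx : ∀ i, x i ⬝ᵥ e = 1) (w : ι → ℝ)
    (hw_nonneg : ∀ i, 0 ≤ w i) (hw : ∑ i, w i = 1) (hM : (infoMatrix x w).PosDef) :
    (infoMatrix x w).det ≤ (infoMatrix x (algorithmIIStep x w)).det ∧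
      ((infoMatrix x w).det = (infoMatrix x (algorithmIIStep x w)).det →
        algorithmIIStep x w = w) := by
  have hκ' : 1 < Fintype.card κ := by omega
  have hstep := sum_algorithmIIStep hκ' hw hM.isUnit
  have hB := posDef_recentredInfoMatrix (w := w) hx hw hstep
    (algorithmIIStep_nonneg hκ' hx hw_nonneg hw hM)
    (posDef_infoMatrix_algorithmIIStep hκ' hx hw_nonneg hw hM)
  by_cases heq : infoMatrix x w = recentredInfoMatrix x w (algorithmIIStep x w)
  · have hfix := algorithmIIStep_eq_of_recentredInfoMatrix_eq hκ hx hw_nonneg hw hM heq.symm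
    exact ⟨by rw [hfix], fun _ => hfix⟩
  · have hlt := det_lt_det_of_trace_inv_mul_le_card hB hM
      (trace_recentredInfoMatrix_inv_mul_le_card hκ' hx hw_nonneg hw hM hB) heq
    rw [det_recentredInfoMatrix hx hw hstep] at hlt
    exact ⟨hlt.le, fun h => absurd h hlt.ne⟩

/-- Strict monotonicity of Titterington's Algorithm II: if `m ≥ 3`, each design point has
first coordinate 1, the design matrix has full rank `m`, and `w, w' ∈ Ω₊` are related by the
Algorithm II update, then `det M(w) ≤ det M(w')`, with equality only if `w' = w`. -/
theorem stmt_0 {n m : ℕ} (hm : 3 ≤ m) (hnm : m ≤ n)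
    (x : Fin n → Fin m → ℝ)
    (hx1 : ∀ i, x i ⟨0, by omega⟩ = 1)
    (hrank : (Matrix.of x).rank = m)
    (w w' : Fin n → ℝ)
    (hw0 : ∀ i, 0 ≤ w i) (hw1 : ∑ i, w i = 1) (hMw : (Mmat x w).PosDef)
    (hw'0 : ∀ i, 0 ≤ w' i) (hw'1 : ∑ i, w' i = 1) (hMw' : (Mmat x w').PosDef)
    (hupd : ∀ i, w' i = w i * ((x i ⬝ᵥ (Mmat x w)⁻¹ *ᵥ x i) - 1) / ((m : ℝ) - 1)) :
    (Mmat x w).det ≤ (Mmat x w').det ∧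
      ((Mmat x w).det = (Mmat x w').det → w' = w) := by
  obtain rfl : w' = algorithmIIStep x w := funext fun i => by
    simp [hupd, algorithmIIStep, algorithmIIFactor, infoMatrix, Mmat, mul_div_assoc]
  exact stmt_0_general (by simpa using hm) x (Pi.single ⟨0, by omega⟩ 1) (by simpa using hx1) w
    hw0 hw1 hMw
end

section
/- Eigenvalue bounds for the matrix rate: assume 0 ≤ α < m, X has full rank m ≥ 2, and w* ∈ Ω is a global maximizer of det M(w) over Ω̄ with all coordinates positive. Then the n×n matrix R(α) (the Jacobian of T_α at w*) is diagonalizable, and every eigenvalue of R(α) lies in the interval [−α/(m − α), 1]. -/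
open Matrix Filter

/-- The multiplicative update map `T_α(w)_i = w_i (x_iᵀ M(w)⁻¹ x_i − α)/(m − α)`. -/
noncomputable def Talg {n m : ℕ} (x : Fin n → Fin m → ℝ) (α : ℝ) (w : Fin n → ℝ) :
    Fin n → ℝ :=
  fun i => w i * ((x i ⬝ᵥ (Mmat x w)⁻¹ *ᵥ x i) - α) / ((m : ℝ) - α)

/-! Stationarity of `det M` at an interior maximizer forces `x_iᵀ M⁻¹ x_i = m` for every `i`, since
the derivative of `det M` in the direction `e_i - w*` is `det M * (x_iᵀ M⁻¹ x_i - m)`. With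
`G = X M⁻¹ Xᵀ` the Jacobian is then `R = 1 - (m - α)⁻¹ diag(w*) (G ∘ G)`, where `∘` is the
entrywise product. A positive diagonal matrix times a symmetric one is similar to a symmetric
matrix, so `R` is diagonalizable. The eigenvalues of `diag(w*) (G ∘ G)` are nonnegative by the
Schur product theorem. They are at most `m` by Gershgorin's theorem: `G diag(w*) G = G`, so
`(G ∘ G) diag(w*)` has nonnegative entries and its row sums are the diagonal entries of `G`, all
equal to `m`. -/

open scoped Topology

section Matrix

variable {ι κ : Type*}

theorem mulVec_injective_of_rank_eq_card [Fintype ι] {𝕜 : Type*} [Field 𝕜] {A : Matrix κ ι 𝕜}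
    (hA : A.rank = Fintype.card ι) : Function.Injective A.mulVec := by
  rw [mulVec_injective_iff, linearIndependent_iff_card_eq_finrank_span, ← hA,
    rank_eq_finrank_span_cols]
  rfl

variable [Fintype ι] [DecidableEq ι]

theorem diag_mul_diagonal_mul {R : Type*} [CommSemiring R] (A : Matrix κ ι R) (v : ι → R)
    (B : Matrix ι κ R) : (A * diagonal v * B).diag = (A ⊙ Bᵀ) *ᵥ v := by
  ext i
  rw [diag_apply, Matrix.mul_apply]
  simp only [mul_diagonal, mulVec, dotProduct, hadamard_apply, transpose_apply, mul_right_comm]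

theorem spectrum_mul_comm {𝕜 : Type*} [Field 𝕜] (A B : Matrix ι ι 𝕜) :
    spectrum 𝕜 (A * B) = spectrum 𝕜 (B * A) := by
  ext μ
  rw [mem_spectrum_iff_isRoot_charpoly, mem_spectrum_iff_isRoot_charpoly, charpoly_mul_comm]

theorem spectrum_conj_diagonal {𝕜 : Type*} [Field 𝕜] {P : Matrix ι ι 𝕜} (hP : IsUnit P)
    (d : ι → 𝕜) : spectrum 𝕜 (P * diagonal d * P⁻¹) = Set.range d := by
  obtain ⟨u, rfl⟩ := hP
  rw [← coe_units_inv, spectrum.units_conjugate, spectrum_diagonal]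

theorem one_sub_smul_conj_diagonal {R : Type*} [CommRing R] {P : Matrix ι ι R} (hP : IsUnit P)
    (c : R) (d : ι → R) :
    1 - c • (P * diagonal d * P⁻¹) = P * diagonal (fun i => 1 - c * d i) * P⁻¹ := by
  have hdiagonal : (diagonal fun i => 1 - c * d i) = 1 - c • diagonal d := by
    rw [← diagonal_one, ← diagonal_smul, diagonal_sub]
    rfl
  rw [hdiagonal, mul_sub, sub_mul, mul_one, mul_nonsing_inv P ((isUnit_iff_isUnit_det P).mp hP),
    Matrix.mul_smul, Matrix.smul_mul]

theorem nonneg_of_mem_spectrum_mul {A B : Matrix ι ι ℝ} (hA : A.PosSemidef) (hB : B.PosSemidef)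
    {μ : ℝ} (hμ : μ ∈ spectrum ℝ (A * B)) : 0 ≤ μ := by
  open scoped MatrixOrder in
  obtain ⟨C, rfl⟩ := CStarAlgebra.nonneg_iff_eq_star_mul_self.mp hA.nonneg
  rw [mul_assoc, spectrum_mul_comm] at hμ
  exact (posSemidef_iff_isHermitian_and_spectrum_nonneg.mp (hB.mul_mul_conjTranspose_same C)).2 hμ

theorem le_of_mem_spectrum_of_sum_row_le {A : Matrix ι ι ℝ} {c μ : ℝ} (hA : ∀ i j, 0 ≤ A i j)
    (hc : ∀ i, ∑ j, A i j ≤ c) (hμ : μ ∈ spectrum ℝ A) : μ ≤ c := by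
  rw [← spectrum_toLin', ← Module.End.hasEigenvalue_iff_mem_spectrum] at hμ
  obtain ⟨k, hk⟩ := eigenvalue_mem_ball hμ
  have hdist : μ - A k k ≤ ∑ j ∈ Finset.univ.erase k, A k j := by
    simpa only [Real.norm_of_nonneg (hA _ _)] using
      (le_abs_self _).trans (Metric.mem_closedBall.mp hk)
  linarith [hc k, Finset.add_sum_erase Finset.univ (A k) (Finset.mem_univ k)]

theorem spectrum_diagonal_mul_subset_Icc {H : Matrix ι ι ℝ} (hH : H.PosSemidef)
    (hH0 : ∀ i j, 0 ≤ H i j) {w : ι → ℝ} (hw : ∀ i, 0 ≤ w i) {c : ℝ}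
    (hc : ∀ i, (H *ᵥ w) i ≤ c) : spectrum ℝ (diagonal w * H) ⊆ Set.Icc 0 c := by
  intro μ hμ
  have hμ0 : 0 ≤ μ := nonneg_of_mem_spectrum_mul (PosSemidef.diagonal hw) hH hμ
  refine ⟨hμ0, ?_⟩
  rw [spectrum_mul_comm] at hμ
  refine le_of_mem_spectrum_of_sum_row_le (fun i j => ?_) (fun i => ?_) hμ
  · rw [mul_diagonal]
    exact mul_nonneg (hH0 i j) (hw j)
  · simpa only [mul_diagonal] using! hc i

theorem exists_eq_conj_diagonal_of_isHermitian {𝕜 : Type*} [RCLike 𝕜] {A : Matrix ι ι 𝕜}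
    (hA : A.IsHermitian) :
    ∃ (P : Matrix ι ι 𝕜) (d : ι → 𝕜), IsUnit P ∧ A = P * diagonal d * P⁻¹ := by
  have hU := Unitary.coe_mul_star_self hA.eigenvectorUnitary
  refine ⟨hA.eigenvectorUnitary, RCLike.ofReal ∘ hA.eigenvalues, IsUnit.of_mul_eq_one _ hU, ?_⟩
  rw [inv_eq_right_inv hU]
  exact hA.spectral_theorem

theorem exists_diagonal_mul_eq_conj_diagonal {H : Matrix ι ι ℝ} (hH : H.IsHermitian) {w : ι → ℝ}
    (hw : ∀ i, 0 < w i) :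
    ∃ (P : Matrix ι ι ℝ) (d : ι → ℝ), IsUnit P ∧ diagonal w * H = P * diagonal d * P⁻¹ := by
  set S : Matrix ι ι ℝ := diagonal fun i => √(w i)
  have hS : IsUnit S := isUnit_diagonal.mpr <| Pi.isUnit_iff.mpr fun i =>
    (Real.sqrt_pos.mpr (hw i)).ne'.isUnit
  have hSS : diagonal w = S * S := by
    simp only [S, diagonal_mul_diagonal, Real.mul_self_sqrt (hw _).le]
  have hSHS : (S * H * S).IsHermitian := by
    simpa [S] using isHermitian_mul_mul_conjTranspose S hH
  obtain ⟨U, d, hU, hspec⟩ := exists_eq_conj_diagonal_of_isHermitian hSHS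
  refine ⟨S * U, d, hS.mul hU, ?_⟩
  calc diagonal w * H = S * (S * H * S) * S⁻¹ := by
        rw [hSS, ← mul_assoc, ← mul_assoc,
          mul_nonsing_inv_cancel_right _ _ ((isUnit_iff_isUnit_det S).mp hS)]
    _ = S * U * diagonal d * (S * U)⁻¹ := by
        rw [hspec, Matrix.mul_inv_rev]
        simp only [mul_assoc]

end Matrix

section Derivative

variable {𝕜 ι : Type*} [NontriviallyNormedField 𝕜] [Fintype ι]

theorem hasDerivAt_matrix_mul_mul {κ κ' ι' : Type*} [Finite κ] [Finite κ'] [Fintype ι']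
    (A : Matrix κ ι 𝕜) {F : 𝕜 → Matrix ι ι' 𝕜} {F' : Matrix ι ι' 𝕜} {t : 𝕜}
    (hF : HasDerivAt F F' t) (B : Matrix ι' κ' 𝕜) :
    HasDerivAt (fun s => A * F s * B) (A * F' * B) t := by
  have := Fintype.ofFinite κ
  have := Fintype.ofFinite κ'
  have hentry (k : ι) (l : ι') : HasDerivAt (fun s => F s k l) (F' k l) t :=
    hasDerivAt_pi.mp (hasDerivAt_pi.mp hF k) l
  refine hasDerivAt_pi.mpr fun i => hasDerivAt_pi.mpr fun j => ?_
  simp only [Matrix.mul_apply]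
  exact HasDerivAt.fun_sum fun l _ =>
    (HasDerivAt.fun_sum fun k _ => (hentry k l).const_mul (A i k)).mul_const (B l j)

variable [DecidableEq ι]

theorem hasDerivAt_det_one_add_smul (A : Matrix ι ι 𝕜) :
    HasDerivAt (fun t : 𝕜 => (1 + t • A).det) A.trace 0 := by
  obtain ⟨q, hq⟩ : ∃ q : Polynomial 𝕜,
      ∀ t, (1 + t • A).det = 1 + A.trace * t + q.eval t * t ^ 2 :=
    ⟨_, fun t => det_one_add_smul t A⟩
  simp only [hq]
  have hlin := ((hasDerivAt_id (0 : 𝕜)).const_mul A.trace).const_add 1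
  exact (hlin.add ((q.hasDerivAt 0).mul (hasDerivAt_pow 2 (0 : 𝕜)))).congr_deriv (by simp)

theorem hasDerivAt_det_add_smul {A : Matrix ι ι 𝕜} (hA : IsUnit A.det) (B : Matrix ι ι 𝕜) :
    HasDerivAt (fun t : 𝕜 => (A + t • B).det) (A.det * (A⁻¹ * B).trace) 0 := by
  have hfactor (t : 𝕜) : A + t • B = A * (1 + t • (A⁻¹ * B)) := by
    rw [mul_add, mul_one, Matrix.mul_smul, mul_nonsing_inv_cancel_left _ _ hA]
  simp only [hfactor, det_mul]
  exact (hasDerivAt_det_one_add_smul _).const_mul _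

open scoped Matrix.Norms.Operator in
theorem hasDerivAt_inv_add_smul [CompleteSpace 𝕜] {A : Matrix ι ι 𝕜} (hA : IsUnit A.det)
    (B : Matrix ι ι 𝕜) :
    HasDerivAt (fun t : 𝕜 => (A + t • B)⁻¹) (-(A⁻¹ * B * A⁻¹)) 0 := by
  -- `Matrix ι ι 𝕜` also carries the entrywise uniformity; the one of the operator norm is meant.
  have : @CompleteSpace (Matrix ι ι 𝕜) PseudoMetricSpace.toUniformSpace :=
    FiniteDimensional.complete 𝕜 _
  obtain ⟨u, rfl⟩ := (isUnit_iff_isUnit_det A).mpr hA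
  have hinv := (hasFDerivAt_ringInverse (𝕜 := 𝕜) u).hasLineDerivAt B
  simpa only [nonsing_inv_eq_ringInverse, Ring.inverse_unit] using! hinv

end Derivative

section Simplex

variable {ι : Type*} [Fintype ι]

theorem eventually_add_smul_mem_stdSimplex {w v : ι → ℝ} (hw : ∀ i, 0 < w i) (hw1 : ∑ i, w i = 1)
    (hv : ∑ i, v i = 0) : ∀ᶠ t : ℝ in 𝓝 0, w + t • v ∈ stdSimplex ℝ ι := by
  have hpos : ∀ᶠ t : ℝ in 𝓝 0, ∀ i, 0 < (w + t • v) i :=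
    eventually_all.mpr fun i =>
      ContinuousAt.eventually_lt (by fun_prop) (by fun_prop) (by simpa using hw i)
  filter_upwards [hpos] with t ht
  refine ⟨fun i => (ht i).le, ?_⟩
  simp [Finset.sum_add_distrib, ← Finset.mul_sum, hw1, hv]

theorem hasLineDerivAt_eq_zero_of_isLocalMaxOn_stdSimplex {f : (ι → ℝ) → ℝ} {f' : ℝ}
    {w v : ι → ℝ} (hmax : IsLocalMaxOn f (stdSimplex ℝ ι) w) (hw : ∀ i, 0 < w i)
    (hw1 : ∑ i, w i = 1) (hv : ∑ i, v i = 0) (hf : HasLineDerivAt ℝ f f' w v) : f' = 0 := by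
  have hline : Tendsto (fun t : ℝ => w + t • v) (𝓝 0) (𝓝[stdSimplex ℝ ι] w) :=
    tendsto_nhdsWithin_iff.mpr ⟨Continuous.tendsto' (by fun_prop) _ _ (by simp),
      eventually_add_smul_mem_stdSimplex hw hw1 hv⟩
  have hlocal : IsLocalMax (fun t : ℝ => f (w + t • v)) 0 := by
    simpa [IsLocalMax, IsMaxFilter] using hline.eventually hmax
  exact hlocal.hasDerivAt_eq_zero hf

end Simplex

section Design

variable {n m : ℕ} {x : Fin n → Fin m → ℝ} {w : Fin n → ℝ}

theorem Mmat_eq_transpose_mul_diagonal_mul (x : Fin n → Fin m → ℝ) (w : Fin n → ℝ) :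
    Mmat x w = (of x)ᵀ * diagonal w * of x := by
  ext k l
  rw [Mmat, Matrix.sum_apply, Matrix.mul_apply]
  simp only [Matrix.smul_apply, vecMulVec_apply, mul_diagonal, transpose_apply, of_apply,
    smul_eq_mul, mul_left_comm, mul_assoc]

theorem Mmat_add_smul (x : Fin n → Fin m → ℝ) (w v : Fin n → ℝ) (t : ℝ) :
    Mmat x (w + t • v) = Mmat x w + t • Mmat x v := by
  simp only [Mmat, Pi.add_apply, Pi.smul_apply, smul_eq_mul, add_smul, mul_smul,
    Finset.sum_add_distrib, Finset.smul_sum]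

theorem posDef_Mmat (hx : (of x).rank = m) (hw : ∀ i, 0 < w i) : (Mmat x w).PosDef := by
  rw [Mmat_eq_transpose_mul_diagonal_mul]
  exact (PosDef.diagonal hw).conjTranspose_mul_mul_same
    (mulVec_injective_of_rank_eq_card (hx.trans (Fintype.card_fin m).symm))

/-- The dispersion matrix `X M(w)⁻¹ Xᵀ` of a design: up to the noise variance, its entries
`x_iᵀ M(w)⁻¹ x_j` are the covariances of the least-squares predictions at the design points. -/
noncomputable def dispersionMat (x : Fin n → Fin m → ℝ) (w : Fin n → ℝ) :
    Matrix (Fin n) (Fin n) ℝ :=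
  of x * (Mmat x w)⁻¹ * (of x)ᵀ

theorem Talg_eq_dispersionMat (x : Fin n → Fin m → ℝ) (α : ℝ) (w : Fin n → ℝ) (i : Fin n) :
    Talg x α w i = w i * (dispersionMat x w i i - α) / (m - α) := by
  have hdiag : dispersionMat x w i i = x i ⬝ᵥ (Mmat x w)⁻¹ *ᵥ x i := by
    rw [dotProduct_mulVec]
    rfl
  rw [Talg, hdiag]

theorem posSemidef_dispersionMat (hM : (Mmat x w).PosDef) : (dispersionMat x w).PosSemidef :=
  hM.inv.posSemidef.mul_mul_conjTranspose_same (of x)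

theorem transpose_dispersionMat (x : Fin n → Fin m → ℝ) (w : Fin n → ℝ) :
    (dispersionMat x w)ᵀ = dispersionMat x w := by
  simp only [dispersionMat, Mmat_eq_transpose_mul_diagonal_mul, transpose_mul, transpose_transpose,
    transpose_nonsing_inv, diagonal_transpose, Matrix.mul_assoc]

theorem dispersionMat_mul_diagonal_mul_dispersionMat (hM : IsUnit (Mmat x w).det) :
    dispersionMat x w * diagonal w * dispersionMat x w = dispersionMat x w := by
  calc dispersionMat x w * diagonal w * dispersionMat x w
      = of x * ((Mmat x w)⁻¹ * ((of x)ᵀ * diagonal w * of x) * (Mmat x w)⁻¹) * (of x)ᵀ := by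
        simp only [dispersionMat, Matrix.mul_assoc]
    _ = dispersionMat x w := by
        rw [← Mmat_eq_transpose_mul_diagonal_mul, nonsing_inv_mul _ hM, one_mul, dispersionMat]

theorem hadamard_dispersionMat_mulVec (hM : IsUnit (Mmat x w).det) :
    (dispersionMat x w ⊙ dispersionMat x w) *ᵥ w = (dispersionMat x w).diag := by
  conv_rhs => rw [← dispersionMat_mul_diagonal_mul_dispersionMat hM, diag_mul_diagonal_mul,
    transpose_dispersionMat]

theorem spectrum_diagonal_mul_hadamard_dispersionMat_subset_Icc (hM : (Mmat x w).PosDef)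
    (hw : ∀ i, 0 ≤ w i) {c : ℝ} (hc : ∀ i, dispersionMat x w i i ≤ c) :
    spectrum ℝ (diagonal w * (dispersionMat x w ⊙ dispersionMat x w)) ⊆ Set.Icc 0 c :=
  have hG := posSemidef_dispersionMat hM
  spectrum_diagonal_mul_subset_Icc (hG.hadamard hG) (fun _ _ => mul_self_nonneg _) hw
    fun i => (congrFun (hadamard_dispersionMat_mulVec hM.det_pos.ne'.isUnit) i).trans_le (hc i)

theorem trace_inv_mul_Mmat (x : Fin n → Fin m → ℝ) (w v : Fin n → ℝ) :
    ((Mmat x w)⁻¹ * Mmat x v).trace = ∑ i, dispersionMat x w i i * v i := by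
  calc ((Mmat x w)⁻¹ * Mmat x v).trace
      = ((Mmat x w)⁻¹ * (of x)ᵀ * diagonal v * of x).trace := by
        rw [Mmat_eq_transpose_mul_diagonal_mul x v]
        simp only [Matrix.mul_assoc]
    _ = (dispersionMat x w * diagonal v).trace := by
        rw [trace_mul_comm, dispersionMat]
        simp only [Matrix.mul_assoc]
    _ = ∑ i, dispersionMat x w i i * v i := by
        simp only [trace, diag_apply, mul_diagonal]

theorem hasLineDerivAt_det_Mmat (hM : IsUnit (Mmat x w).det) (v : Fin n → ℝ) :
    HasLineDerivAt ℝ (fun u => (Mmat x u).det)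
      ((Mmat x w).det * ∑ i, dispersionMat x w i i * v i) w v := by
  simp only [HasLineDerivAt, Mmat_add_smul, ← trace_inv_mul_Mmat]
  exact hasDerivAt_det_add_smul hM _

theorem diag_dispersionMat_of_isLocalMaxOn (hM : IsUnit (Mmat x w).det) (hw : ∀ i, 0 < w i)
    (hw1 : ∑ i, w i = 1)
    (hmax : IsLocalMaxOn (fun v => (Mmat x v).det) (stdSimplex ℝ (Fin n)) w) (i : Fin n) :
    dispersionMat x w i i = m := by
  have hmean : ∑ j, dispersionMat x w j j * w j = m := by
    rw [← trace_inv_mul_Mmat, nonsing_inv_mul _ hM, trace_one, Fintype.card_fin]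
  have hstationary :
      (Mmat x w).det * ∑ j, dispersionMat x w j j * (Pi.single i 1 - w : Fin n → ℝ) j = 0 :=
    hasLineDerivAt_eq_zero_of_isLocalMaxOn_stdSimplex hmax hw hw1 (by simp [hw1])
      (hasLineDerivAt_det_Mmat hM _)
  have hdiff : ∑ j, dispersionMat x w j j * (Pi.single i 1 - w : Fin n → ℝ) j =
      dispersionMat x w i i - m := by
    simp [mul_sub, Finset.sum_sub_distrib, hmean, Pi.single_apply]
  rw [hdiff] at hstationary
  exact sub_eq_zero.mp ((mul_eq_zero.mp hstationary).resolve_left hM.ne_zero)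

theorem hasDerivAt_dispersionMat_add_smul (hM : IsUnit (Mmat x w).det) (v : Fin n → ℝ) :
    HasDerivAt (fun t : ℝ => dispersionMat x (w + t • v))
      (-(dispersionMat x w * diagonal v * dispersionMat x w)) 0 := by
  have hderiv : -(dispersionMat x w * diagonal v * dispersionMat x w) =
      of x * -((Mmat x w)⁻¹ * Mmat x v * (Mmat x w)⁻¹) * (of x)ᵀ := by
    simp only [dispersionMat, Mmat_eq_transpose_mul_diagonal_mul x v, Matrix.mul_neg,
      Matrix.neg_mul, Matrix.mul_assoc]
  rw [hderiv]
  simp only [dispersionMat, Mmat_add_smul]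
  exact hasDerivAt_matrix_mul_mul (of x) (hasDerivAt_inv_add_smul hM (Mmat x v)) (of x)ᵀ

theorem hasDerivAt_Talg_add_smul (hM : IsUnit (Mmat x w).det) (α : ℝ) (v : Fin n → ℝ)
    (i : Fin n) :
    HasDerivAt (fun t : ℝ => Talg x α (w + t • v) i)
      ((v i * (dispersionMat x w i i - α) -
        w i * ((dispersionMat x w ⊙ dispersionMat x w) *ᵥ v) i) / (m - α)) 0 := by
  have hweight : HasDerivAt (fun t : ℝ => (w + t • v) i) (v i) 0 := by
    simpa using ((hasDerivAt_id (0 : ℝ)).mul_const (v i)).const_add (w i)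
  have hdisp : HasDerivAt (fun t : ℝ => dispersionMat x (w + t • v) i i)
      (-((dispersionMat x w ⊙ dispersionMat x w) *ᵥ v) i) 0 := by
    have hentry := hasDerivAt_pi.mp
      (hasDerivAt_pi.mp (hasDerivAt_dispersionMat_add_smul hM v) i) i
    have hdiag := congrFun (diag_mul_diagonal_mul (dispersionMat x w) v (dispersionMat x w)) i
    rw [transpose_dispersionMat] at hdiag
    rw [← hdiag]
    exact hentry
  simp only [Talg_eq_dispersionMat]
  refine ((hweight.mul (hdisp.sub_const α)).div_const _).congr_deriv ?_
  simp only [zero_smul, add_zero]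
  ring

theorem eq_one_sub_of_hasFDerivAt_Talg {α : ℝ} (hα : α ≠ m) (hM : IsUnit (Mmat x w).det)
    (hdiag : ∀ i, dispersionMat x w i i = m) {R : Matrix (Fin n) (Fin n) ℝ}
    (hR : HasFDerivAt (Talg x α) (LinearMap.toContinuousLinearMap (toLin' R)) w) :
    R = 1 - ((m : ℝ) - α)⁻¹ • (diagonal w * (dispersionMat x w ⊙ dispersionMat x w)) := by
  have hgap : (m : ℝ) - α ≠ 0 := sub_ne_zero.mpr hα.symm
  refine ext_of_mulVec_single fun j => funext fun i => ?_
  have hRv := hasDerivAt_pi.mp (hR.hasLineDerivAt (Pi.single j 1)) i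
  refine (hRv.unique (hasDerivAt_Talg_add_smul hM α _ i)).trans ?_
  simp only [hdiag, sub_mulVec, one_mulVec, smul_mulVec, ← mulVec_mulVec, mulVec_diagonal,
    Pi.sub_apply, Pi.smul_apply, smul_eq_mul]
  field_simp

end Design

theorem stmt_4_general {n m : ℕ} (x : Fin n → Fin m → ℝ) (hrank : (Matrix.of x).rank = m)
    (α : ℝ) (hαm : α < m)
    (wstar : Fin n → ℝ) (hpos : ∀ i, 0 < wstar i) (hsum : ∑ i, wstar i = 1)
    (hmax : IsLocalMaxOn (fun v => (Mmat x v).det) (stdSimplex ℝ (Fin n)) wstar)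
    (R : Matrix (Fin n) (Fin n) ℝ)
    (hR : HasFDerivAt (Talg x α)
      (LinearMap.toContinuousLinearMap (Matrix.toLin' R)) wstar) :
    ∃ P D : Matrix (Fin n) (Fin n) ℝ, IsUnit P.det ∧ D.IsDiag ∧
      R = P * D * P⁻¹ ∧
      ∀ i, D i i ∈ Set.Icc (-(α / ((m : ℝ) - α))) 1 := by
  have hgap : 0 < (m : ℝ) - α := sub_pos.mpr hαm
  have hM := posDef_Mmat hrank hpos
  have hdet := hM.det_pos.ne'.isUnit
  have hG := posSemidef_dispersionMat hM
  have hdiag := diag_dispersionMat_of_isLocalMaxOn hdet hpos hsum hmax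
  have hspec := spectrum_diagonal_mul_hadamard_dispersionMat_subset_Icc hM (fun i => (hpos i).le)
    fun i => (hdiag i).le
  obtain ⟨P, d, hP, hPd⟩ := exists_diagonal_mul_eq_conj_diagonal (hG.hadamard hG).isHermitian hpos
  rw [hPd, spectrum_conj_diagonal hP] at hspec
  refine ⟨P, diagonal fun i => 1 - ((m : ℝ) - α)⁻¹ * d i, (isUnit_iff_isUnit_det P).mp hP,
    isDiag_diagonal _, ?_, fun i => ?_⟩
  · rw [eq_one_sub_of_hasFDerivAt_Talg hαm.ne hdet hdiag hR, hPd, one_sub_smul_conj_diagonal hP]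
  · obtain ⟨hd0, hdm⟩ := hspec ⟨i, rfl⟩
    have hlow : -(α / (m - α)) = 1 - ((m : ℝ) - α)⁻¹ * m := by field_simp; ring
    rw [diagonal_apply_eq, hlow]
    have hinv : 0 ≤ ((m : ℝ) - α)⁻¹ := inv_nonneg.mpr hgap.le
    exact ⟨sub_le_sub_left (mul_le_mul_of_nonneg_left hdm hinv) _,
      sub_le_self _ (mul_nonneg hinv hd0)⟩

/-- Eigenvalue bounds for the matrix rate: if `0 ≤ α < m`, the design matrix has full rank
`m ≥ 2`, and `w*` is an interior global maximizer of `det M` over the closed simplex, then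
the matrix rate `R(α)` (the Jacobian of `T_α` at `w*`) is diagonalizable and all its
eigenvalues lie in `[−α/(m−α), 1]`. -/
theorem stmt_4 {n m : ℕ} (hm : 2 ≤ m) (hnm : m ≤ n)
    (x : Fin n → Fin m → ℝ) (hrank : (Matrix.of x).rank = m)
    (α : ℝ) (hα0 : 0 ≤ α) (hαm : α < m)
    (wstar : Fin n → ℝ) (hpos : ∀ i, 0 < wstar i) (hsum : ∑ i, wstar i = 1)
    (hopt : ∀ v : Fin n → ℝ, (∀ i, 0 ≤ v i) → ∑ i, v i = 1 →
      (Mmat x v).det ≤ (Mmat x wstar).det)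
    (R : Matrix (Fin n) (Fin n) ℝ)
    (hR : HasFDerivAt (Talg x α)
      (LinearMap.toContinuousLinearMap (Matrix.toLin' R)) wstar) :
    ∃ P D : Matrix (Fin n) (Fin n) ℝ, IsUnit P.det ∧ D.IsDiag ∧
      R = P * D * P⁻¹ ∧
      ∀ i, D i i ∈ Set.Icc (-(α / ((m : ℝ) - α))) 1 :=
  have hmax : IsMaxOn (fun v => (Mmat x v).det) (stdSimplex ℝ (Fin n)) wstar :=
    fun v hv => hopt v hv.1 hv.2
  stmt_4_general x hrank α hαm wstar hpos hsum hmax.localize R hR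
end
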